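/- Let K be a field of characteristic ≠ 2 and let f(x) = a x^2 + b x + c ∈ K[x] with a ≠ 0 and D = b^2 - 4ac ≠ 0. If g, h ∈ K[x] with deg g ≥ 2, g' ≠ 0, and f(g(x)) = f(x) h(x)^2, then over the extension K(√D) there exists n ≥ 1 and signs ε, δ ∈ {±1} such that g(x) = (ε T_n((2ax+b)/√D) √D - b)/(2a) and h(x) = δ U_{n-1}((2ax+b)/√D). -/

import Mathlib

open Polynomial

theorem pell_aux {L : Type*} [Field L] (h2 : (2 : L) ≠ 0) (N : ℕ) :
    ∀ P Q : L[X], P ^ 2 - 1 = (X ^ 2 - 1) * Q ^ 2 → Q.degree < (N : WithBot ℕ) →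
      ∃ (n : ℤ) (ε : L), (ε = 1 ∨ ε = -1) ∧ P = C ε * Chebyshev.T L n ∧
        Q = C ε * Chebyshev.U L (n - 1) := by
  induction N with
  | zero =>
    intro P Q h hd
    have hQ : Q = 0 := by
      by_contra hQ
      rw [degree_eq_natDegree hQ] at hd
      norm_cast at hd
    subst hQ
    have : P ^ 2 = 1 := by linear_combination h
    rcases sq_eq_sq_iff_eq_or_eq_neg.mp (this.trans (one_pow 2).symm) with h | h
    · exact ⟨0, 1, Or.inl rfl, by simp [h], by simp⟩
    · exact ⟨0, -1, Or.inr rfl, by simp [h], by simp⟩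
  | succ N ih =>
    intro P Q h hd
    by_cases hQ : Q = 0
    · exact ih P Q h (by rw [hQ, degree_zero]; exact WithBot.bot_lt_coe _)
    have key : ∀ R : L[X], R ≠ 0 → R.degree < ((N + 1 : ℕ) : WithBot ℕ) →
        P ^ 2 - 1 = (X ^ 2 - 1) * R ^ 2 →
        P.leadingCoeff = R.leadingCoeff → P.natDegree = R.natDegree + 1 →
        ∃ (n : ℤ) (ε : L), (ε = 1 ∨ ε = -1) ∧ P = C ε * Chebyshev.T L n ∧
          R = C ε * Chebyshev.U L (n - 1) := by
      intro R hR hRd hP hl hn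
      have hdeg : (X * R - P).degree < (N : WithBot ℕ) := by
        by_cases h0 : X * R - P = 0
        · rw [h0, degree_zero]; exact WithBot.bot_lt_coe _
        have hc : (X * R + P).coeff (R.natDegree + 1) ≠ 0 := by
          rw [coeff_add, coeff_X_mul, ← hn, coeff_natDegree, coeff_natDegree, hl, ← two_mul]
          exact mul_ne_zero h2 (leadingCoeff_ne_zero.mpr hR)
        have hle := le_natDegree_of_ne_zero hc
        have hne : X * R + P ≠ 0 := by
          intro h; rw [h] at hc; simp at hc
        have hm : (X * R - P) * (X * R + P) = R ^ 2 - 1 := by linear_combination -hP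
        have h3 := congrArg natDegree hm
        rw [natDegree_mul h0 hne] at h3
        have h4 : (R ^ 2 - 1).natDegree ≤ 2 * R.natDegree := by
          refine (natDegree_sub_le _ _).trans ?_
          simp
        rw [degree_eq_natDegree h0]
        rw [degree_eq_natDegree hR] at hRd
        norm_cast at hRd ⊢
        omega
      obtain ⟨n, ε, hε, e1, e2⟩ := ih (X * P - (X ^ 2 - 1) * R) (X * R - P)
        (by linear_combination hP) hdeg
      refine ⟨n + 1, ε, hε, ?_, ?_⟩
      · have hT := Chebyshev.T_eq_X_mul_T_sub_pol_U L (n - 1)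
        rw [show n - 1 + 2 = n + 1 by ring, show n - 1 + 1 = n by ring] at hT
        rw [hT]
        linear_combination X * e1 + (X ^ 2 - 1) * e2
      · have hU := Chebyshev.U_eq_X_mul_U_add_T L (n - 1)
        rw [show n - 1 + 1 = n by ring] at hU
        rw [show n + 1 - 1 = n by ring, hU]
        linear_combination e1 + X * e2
    have hX : (X ^ 2 - 1 : L[X]).natDegree = 2 := by
      rw [← C_1]; exact natDegree_X_pow_sub_C
    have hXm : (X ^ 2 - 1 : L[X]).Monic := by
      rw [← C_1]; exact monic_X_pow_sub_C 1 two_ne_zero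
    have hnd : (P ^ 2 - 1).natDegree = 2 + 2 * Q.natDegree := by
      rw [h, natDegree_mul hXm.ne_zero (pow_ne_zero 2 hQ), hX, natDegree_pow]
    have hnd2 : (P ^ 2 - 1).natDegree = 2 * P.natDegree := by
      rw [← C_1, natDegree_sub_C, natDegree_pow]
    have hlc : P.leadingCoeff ^ 2 = Q.leadingCoeff ^ 2 := by
      have h5 := congrArg leadingCoeff h
      rw [leadingCoeff_mul, hXm.leadingCoeff, one_mul, leadingCoeff_pow] at h5
      rw [← h5, ← leadingCoeff_pow]
      symm
      apply leadingCoeff_sub_of_degree_lt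
      rw [degree_one]
      apply natDegree_pos_iff_degree_pos.mp
      rw [natDegree_pow]; omega
    rcases sq_eq_sq_iff_eq_or_eq_neg.mp hlc with hl | hl
    · exact key Q hQ hd h hl (by omega)
    · obtain ⟨n, ε, hε, e1, e2⟩ := key (-Q) (neg_ne_zero.mpr hQ) (by rwa [degree_neg])
        (by rw [neg_sq]; exact h) (by rw [leadingCoeff_neg]; exact hl)
        (by rw [natDegree_neg]; omega)
      refine ⟨-n, ε, hε, by rw [Chebyshev.T_neg]; exact e1, ?_⟩
      rw [Chebyshev.U_neg_sub_one]
      linear_combination -e2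

theorem stmt_6 {K : Type*} [Field K] (hchar : (2 : K) ≠ 0)
    (a b c : K) (ha : a ≠ 0) (hD : b ^ 2 - 4 * a * c ≠ 0)
    (g h : K[X]) (hg : 2 ≤ g.natDegree) (hg' : derivative g ≠ 0)
    (heq : (C a * X ^ 2 + C b * X + C c).comp g = (C a * X ^ 2 + C b * X + C c) * h ^ 2)
    (L : Type*) [Field L] [Algebra K L] (s : L)
    (hs : s ^ 2 = algebraMap K L (b ^ 2 - 4 * a * c)) :
    ∃ (n : ℕ) (ε δ : L), 1 ≤ n ∧ (ε = 1 ∨ ε = -1) ∧ (δ = 1 ∨ δ = -1) ∧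
      g.map (algebraMap K L) =
        C (algebraMap K L (2 * a))⁻¹ *
          (C (ε * s) * (Chebyshev.T L n).comp
              (C s⁻¹ * (C (algebraMap K L (2 * a)) * X + C (algebraMap K L b)))
            - C (algebraMap K L b)) ∧
      h.map (algebraMap K L) =
        C δ * (Chebyshev.U L ((n : ℤ) - 1)).comp
          (C s⁻¹ * (C (algebraMap K L (2 * a)) * X + C (algebraMap K L b))) := by
  set φ := algebraMap K L with hφ
  have h2 : (2 : L) ≠ 0 := by
    have := (map_ne_zero φ).mpr hchar
    rwa [map_ofNat φ 2] at this
  have hA : φ (2 * a) ≠ 0 := (map_ne_zero φ).mpr (mul_ne_zero hchar ha)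
  have hs0 : s ≠ 0 := by
    rintro rfl
    apply (map_ne_zero φ).mpr hD
    rw [← hs]; simp
  have hA' : φ (2 * a) = 2 * φ a := by rw [map_mul, map_ofNat φ 2]
  have ha' : φ a ≠ 0 := (map_ne_zero φ).mpr ha
  have hs' : s ^ 2 = φ b ^ 2 - 4 * φ a * φ c := by
    rw [hs, map_sub, map_mul, map_mul, map_pow, map_ofNat φ 4]
  generalize φ (2 * a) = A at *
  have E := congrArg (Polynomial.map φ) heq
  simp only [Polynomial.map_comp, Polynomial.map_mul, Polynomial.map_add, Polynomial.map_pow,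
    map_C, map_X, add_comp, mul_comp, C_comp, X_comp, pow_comp] at E
  have hgd : (g.map φ).natDegree = g.natDegree := natDegree_map φ
  rw [← hgd] at hg
  clear heq hgd
  generalize g.map φ = G at *
  generalize h.map φ = H at *
  generalize φ a = α at *
  generalize φ b = β at *
  generalize φ c = γ at *
  subst hA'
  set Y : L[X] := C s⁻¹ * (C (2 * α) * X + C β) with hY
  set Z : L[X] := C (2 * α)⁻¹ * (C s * X - C β) with hZ
  have hCs : (C s : L[X]) * C s⁻¹ = 1 := by rw [← C_mul, mul_inv_cancel₀ hs0, C_1]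
  have hCA : (C (2 * α) : L[X]) * C (2 * α)⁻¹ = 1 := by rw [← C_mul, mul_inv_cancel₀ hA, C_1]
  have hZY : Z.comp Y = X := by
    simp only [hZ, mul_comp, sub_comp, C_comp, X_comp, hY]
    linear_combination (C (2 * α)⁻¹ * (C (2 * α) * X + C β)) * hCs + X * hCA
  have hYZ : Y.comp Z = X := by
    simp only [hZ, mul_comp, add_comp, C_comp, X_comp, hY]
    linear_combination (C s⁻¹ * (C s * X - C β)) * hCA + X * hCs
  have hCD : (C s : L[X]) ^ 2 = C β ^ 2 - 4 * C α * C γ := by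
    rw [← C_pow, hs', C_sub, C_mul, C_mul, C_pow, map_ofNat C 4]
  have hC2 : (C (2 * α) : L[X]) = 2 * C α := by rw [C_mul, map_ofNat C 2]
  set W : L[X] := C s⁻¹ * (C (2 * α) * G + C β) with hW
  have hsW : C s * W = 2 * C α * G + C β := by
    rw [hW, ← hC2]; linear_combination (C (2 * α) * G + C β) * hCs
  have hsY : C s * Y = 2 * C α * X + C β := by
    rw [hY, ← hC2]; linear_combination (C (2 * α) * X + C β) * hCs
  have pell : W ^ 2 - 1 = (Y ^ 2 - 1) * H ^ 2 := by
    have hne : (C s : L[X]) ^ 2 ≠ 0 := pow_ne_zero 2 (C_ne_zero.mpr hs0)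
    apply mul_left_cancel₀ hne
    linear_combination (C s * W + (2 * C α * G + C β)) * hsW
      - H ^ 2 * (C s * Y + (2 * C α * X + C β)) * hsY + 4 * C α * E - hCD + H ^ 2 * hCD
  have pell2 : (W.comp Z) ^ 2 - 1 = (X ^ 2 - 1) * (H.comp Z) ^ 2 := by
    have := congrArg (fun p => p.comp Z) pell
    simpa only [sub_comp, mul_comp, pow_comp, one_comp, hYZ] using this
  obtain ⟨n, ε, hε, e1, e2⟩ := pell_aux h2 ((H.comp Z).natDegree + 1) _ _ pell2
    (lt_of_le_of_lt degree_le_natDegree (by norm_cast; omega))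
  have f1 : W = C ε * (Chebyshev.T L n).comp Y := by
    have := congrArg (fun p => p.comp Y) e1
    simpa only [comp_assoc, hZY, comp_X, mul_comp, C_comp] using this
  have f2 : H = C ε * (Chebyshev.U L (n - 1)).comp Y := by
    have := congrArg (fun p => p.comp Y) e2
    simpa only [comp_assoc, hZY, comp_X, mul_comp, C_comp] using this
  have hG : ∀ V : L[X], W = C ε * V → G = C (2 * α)⁻¹ * (C (ε * s) * V - C β) := by
    intro V hV
    rw [C_mul]
    rw [← hC2] at hsW
    linear_combination C (2 * α)⁻¹ * C s * hV - C (2 * α)⁻¹ * hsW - G * hCA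
  have hn0 : n ≠ 0 := by
    rintro rfl
    have h6 := hG _ f1
    rw [Chebyshev.T_zero, one_comp, mul_one, ← C_sub, ← C_mul] at h6
    rw [h6, natDegree_C] at hg
    omega
  rcases Int.natAbs_eq n with hn | hn
  · refine ⟨n.natAbs, ε, ε, by omega, hε, hε, hG _ ?_, ?_⟩
    · rw [← hn]; exact f1
    · rw [← hn]; exact f2
  · refine ⟨n.natAbs, ε, -ε, by omega, hε, ?_, hG _ ?_, ?_⟩
    · rcases hε with h | h <;> simp [h]
    · rw [Chebyshev.T_natAbs]; exact f1
    · rw [f2]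
      conv_lhs => rw [hn]
      rw [Chebyshev.U_neg_sub_one, neg_comp, C_neg]
      ring
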